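/- In the mixture design with n = n₁ + n₂ and design matrix X ∈ ℝ^{n×2} with X_{i1} = x_i, X_{i2} = 0 for i ≤ n₁ and X_{i1} = 0, X_{i2} = x_i for i > n₁, assuming x̄²₁ = (1/n₁)Σ_{i≤n₁}x_i² > 0 and x̄²₂ = (1/n₂)Σ_{i>n₁}x_i² > 0, the least squares estimates under the alternative (β̂ with coordinates β̂₁ = x̄y₁/x̄²₁, β̂₂ = x̄y₂/x̄²₂) and under the null β₁ = β₂ (β̂^N with both coordinates equal to x̄y/x̄²) satisfy ‖Xβ̂ − Xβ̂^N‖² = (n₁x̄²₁ · n₂x̄²₂)/(n·x̄²) · (β̂₁ − β̂₂)². -/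

import Mathlib

open MeasureTheory ProbabilityTheory Filter Topology NNReal

/-- In the mixture design with `n = n₁ + n₂` and design matrix `X ∈ ℝ^{n×2}` whose first
column is `x_i` on group 1 (`i < n₁`, zero elsewhere) and second column is `x_i` on
group 2, assuming `x̄²₁ > 0` and `x̄²₂ > 0`, the least squares estimates under the
alternative (`β̂ = (x̄y₁/x̄²₁, x̄y₂/x̄²₂)`) and under the null `β₁ = β₂`
(`β̂^N` with both coordinates `x̄y/x̄²`) satisfy
`‖Xβ̂ − Xβ̂^N‖² = (n₁x̄²₁ · n₂x̄²₂)/(n·x̄²) · (β̂₁ − β̂₂)²`. -/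
theorem stmt6
    (n₁ n₂ n : ℕ) (hn₁ : 0 < n₁) (hn₂ : 0 < n₂) (hn : n = n₁ + n₂)
    (x y : Fin n → ℝ)
    (X : Matrix (Fin n) (Fin 2) ℝ)
    (hX : ∀ i : Fin n,
      (((i : ℕ) < n₁ → X i 0 = x i ∧ X i 1 = 0) ∧
       (n₁ ≤ (i : ℕ) → X i 0 = 0 ∧ X i 1 = x i)))
    (x2bar1 x2bar2 x2bar xybar1 xybar2 xybar : ℝ)
    (hx2bar1 : x2bar1 = (∑ i : Fin n, if (i : ℕ) < n₁ then x i ^ 2 else 0) / n₁)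
    (hx2bar2 : x2bar2 = (∑ i : Fin n, if n₁ ≤ (i : ℕ) then x i ^ 2 else 0) / n₂)
    (hx2bar : x2bar = (∑ i : Fin n, x i ^ 2) / n)
    (hxybar1 : xybar1 = (∑ i : Fin n, if (i : ℕ) < n₁ then x i * y i else 0) / n₁)
    (hxybar2 : xybar2 = (∑ i : Fin n, if n₁ ≤ (i : ℕ) then x i * y i else 0) / n₂)
    (hxybar : xybar = (∑ i : Fin n, x i * y i) / n)
    (hpos1 : 0 < x2bar1) (hpos2 : 0 < x2bar2)
    (βhat βhatN : Fin 2 → ℝ)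
    (hβhat1 : βhat 0 = xybar1 / x2bar1) (hβhat2 : βhat 1 = xybar2 / x2bar2)
    (hβhatN1 : βhatN 0 = xybar / x2bar) (hβhatN2 : βhatN 1 = xybar / x2bar) :
    ∑ i, (X.mulVec βhat i - X.mulVec βhatN i) ^ 2
      = ((n₁ : ℝ) * x2bar1 * ((n₂ : ℝ) * x2bar2)) / ((n : ℝ) * x2bar)
          * (βhat 0 - βhat 1) ^ 2 := by
  have h1 : (0:ℝ) < n₁ := by exact_mod_cast hn₁
  have h2 : (0:ℝ) < n₂ := by exact_mod_cast hn₂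
  have h0 : (0:ℝ) < n := by
    have : 0 < n := by omega
    exact_mod_cast this
  have hsplit : ∀ f : Fin n → ℝ, ∑ i, f i =
      (∑ i : Fin n, if (i : ℕ) < n₁ then f i else 0) +
      (∑ i : Fin n, if n₁ ≤ (i : ℕ) then f i else 0) := by
    intro f
    rw [← Finset.sum_add_distrib]
    refine Finset.sum_congr rfl fun i _ => ?_
    by_cases h : (i : ℕ) < n₁
    · simp [h, not_le.mpr h]
    · simp [h, not_lt.mp h]
  have hL : ∑ i, (X.mulVec βhat i - X.mulVec βhatN i) ^ 2 =
      (βhat 0 - βhatN 0) ^ 2 * (∑ i : Fin n, if (i : ℕ) < n₁ then x i ^ 2 else 0) +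
      (βhat 1 - βhatN 1) ^ 2 * (∑ i : Fin n, if n₁ ≤ (i : ℕ) then x i ^ 2 else 0) := by
    rw [Finset.mul_sum, Finset.mul_sum, ← Finset.sum_add_distrib]
    refine Finset.sum_congr rfl fun i _ => ?_
    simp only [Matrix.mulVec, dotProduct, Fin.sum_univ_two]
    by_cases h : (i : ℕ) < n₁
    · obtain ⟨a, b⟩ := (hX i).1 h
      rw [a, b, if_pos h, if_neg (not_le.mpr h)]
      ring
    · obtain ⟨a, b⟩ := (hX i).2 (not_lt.mp h)
      rw [a, b, if_neg h, if_pos (not_lt.mp h)]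
      ring
  rw [hL]
  rw [hsplit] at hx2bar hxybar
  generalize (∑ i : Fin n, if (i : ℕ) < n₁ then x i ^ 2 else 0) = S1 at *
  generalize (∑ i : Fin n, if n₁ ≤ (i : ℕ) then x i ^ 2 else 0) = S2 at *
  generalize (∑ i : Fin n, if (i : ℕ) < n₁ then x i * y i else 0) = T1 at *
  generalize (∑ i : Fin n, if n₁ ≤ (i : ℕ) then x i * y i else 0) = T2 at *
  have hS1 : 0 < S1 := by
    rw [hx2bar1] at hpos1
    exact (div_pos_iff_of_pos_right h1).mp hpos1
  have hS2 : 0 < S2 := by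
    rw [hx2bar2] at hpos2
    exact (div_pos_iff_of_pos_right h2).mp hpos2
  have e1 : βhat 0 = T1 / S1 := by rw [hβhat1, hxybar1, hx2bar1]; field_simp
  have e2 : βhat 1 = T2 / S2 := by rw [hβhat2, hxybar2, hx2bar2]; field_simp
  have e3 : xybar / x2bar = (T1 + T2) / (S1 + S2) := by rw [hxybar, hx2bar]; field_simp
  have f1 : (n₁ : ℝ) * x2bar1 = S1 := by rw [hx2bar1]; field_simp
  have f2 : (n₂ : ℝ) * x2bar2 = S2 := by rw [hx2bar2]; field_simp
  have f3 : (n : ℝ) * x2bar = S1 + S2 := by rw [hx2bar]; field_simp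
  rw [f1, f2, f3, hβhatN1, hβhatN2, e1, e2, e3]
  have hS : 0 < S1 + S2 := by positivity
  field_simp
  ring
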